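/- Let σ₁,…,σ_k and π₁,…,π_q be distinct complex numbers respectively, let H_{ij} be complex m×n matrices for 1 ≤ i ≤ k, 1 ≤ j ≤ q, and let α_{ij} ∈ ℂ with α_{i₀j₀} ≠ 0 for a fixed pair (i₀, j₀). Set B_{ij} = α_{ij}·H_{ij}, and define the matrix-valued barycentric form H̃(s,p) = (Σ_{i,j} B_{ij}/((s−σ_i)(p−π_j))) / (Σ_{i,j} α_{ij}/((s−σ_i)(p−π_j))), where the division is scalar division of the matrix-valued numerator by the scalar-valued denominator. Then H̃(s,p) tends (in the space of m×n complex matrices) to H_{i₀j₀} as (s,p) tends to (σ_{i₀}, π_{j₀}) within the set of pairs (s,p) with s ≠ σ_i for all i and p ≠ π_j for all j. That is, the matrix-valued barycentric form interpolates the matrix data H_{i₀j₀} at the support pair (σ_{i₀}, π_{j₀}). -/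

import Mathlib

open Filter Topology

/-!
With `B i j = α i j • H i j`, the barycentric form is the center of mass of the data `H i j` with
weights `α i j / ((s - σ i) * (p - π j))`. Near `(σ i₀, π j₀)` the weight of `H i₀ j₀` dominates
all the others, because the ratio of the `(i, j)` weight to it is a constant multiple of
`(s - σ i₀) / (s - σ i) * ((p - π j₀) / (p - π j))`, where each factor tends to `0` or is
identically `1`, and at least one tends to `0`.
-/

section CenterMass

variable {X ι 𝕜 E : Type*} [Field 𝕜] [TopologicalSpace 𝕜] [IsTopologicalDivisionRing 𝕜]
  [AddCommGroup E] [Module 𝕜 E] [TopologicalSpace E] [ContinuousAdd E] [ContinuousSMul 𝕜 E]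
  {l : Filter X} {t : Finset ι} {w : X → ι → 𝕜}

theorem tendsto_centerMass {v : ι → 𝕜} (hw : ∀ i ∈ t, Tendsto (w · i) l (𝓝 (v i)))
    (hv : ∑ i ∈ t, v i ≠ 0) (z : ι → E) :
    Tendsto (fun x ↦ t.centerMass (w x) z) l (𝓝 (t.centerMass v z)) :=
  ((tendsto_finsetSum t hw).inv₀ hv).smul
    (tendsto_finsetSum t fun i hi ↦ (hw i hi).smul_const (z i))

theorem tendsto_centerMass_of_dominant_weight {i₀ : ι} (hi₀ : i₀ ∈ t)
    (hne : ∀ᶠ x in l, w x i₀ ≠ 0)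
    (hdom : ∀ i ∈ t, i ≠ i₀ → Tendsto (fun x ↦ w x i / w x i₀) l (𝓝 0)) (z : ι → E) :
    Tendsto (fun x ↦ t.centerMass (w x) z) l (𝓝 (z i₀)) := by
  classical
  have normalized_weights : ∀ i ∈ t,
      Tendsto (fun x ↦ ((w x i₀)⁻¹ • w x) i) l (𝓝 (if i₀ = i then 1 else 0)) := by
    intro i hi
    simp only [Pi.smul_apply, smul_eq_mul, ← div_eq_inv_mul]
    split_ifs with h
    · subst h
      exact tendsto_const_nhds.congr' (hne.mono fun x hx ↦ (div_self hx).symm)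
    · exact hdom i hi (Ne.symm h)
  have limit := tendsto_centerMass normalized_weights (by simp [hi₀]) z
  rw [t.centerMass_ite_eq i₀ z hi₀] at limit
  exact limit.congr' (hne.mono fun x hx ↦ t.centerMass_smul_left z (inv_ne_zero hx))

end CenterMass

section SubDivSub

variable {𝕜 : Type*} [Field 𝕜] [TopologicalSpace 𝕜]

theorem tendsto_sub_div_sub_self (a : 𝕜) :
    Tendsto (fun s ↦ (s - a) / (s - a)) (𝓝[≠] a) (𝓝 1) :=
  tendsto_const_nhds.congr' <| eventually_mem_nhdsWithin.mono fun _ hs ↦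
    (div_self (sub_ne_zero.2 hs)).symm

variable [IsTopologicalDivisionRing 𝕜]

theorem tendsto_sub_div_sub_of_ne {a b : 𝕜} (h : b ≠ a) :
    Tendsto (fun s ↦ (s - a) / (s - b)) (𝓝 a) (𝓝 0) := by
  have limit : Tendsto (fun s ↦ (s - a) / (s - b)) (𝓝 a) (𝓝 ((a - a) / (a - b))) :=
    (tendsto_id.sub_const a).div (tendsto_id.sub_const b) (sub_ne_zero.2 h.symm)
  rwa [sub_self, zero_div] at limit

theorem tendsto_sub_div_sub [DecidableEq 𝕜] (a b : 𝕜) :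
    Tendsto (fun s ↦ (s - a) / (s - b)) (𝓝[≠] a) (𝓝 (if b = a then 1 else 0)) := by
  split_ifs with h
  · exact h ▸ tendsto_sub_div_sub_self b
  · exact (tendsto_sub_div_sub_of_ne h).mono_left nhdsWithin_le_nhds

end SubDivSub

theorem nhdsWithin_avoiding_le_prod_nhdsNE {X Y ι κ : Type*} [TopologicalSpace X]
    [TopologicalSpace Y] (σ : ι → X) (π : κ → Y) (i₀ : ι) (j₀ : κ) :
    𝓝[{x : X × Y | (∀ i, x.1 ≠ σ i) ∧ (∀ j, x.2 ≠ π j)}] (σ i₀, π j₀) ≤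
      𝓝[≠] (σ i₀) ×ˢ 𝓝[≠] (π j₀) := by
  rw [← nhdsWithin_prod_eq]
  exact nhdsWithin_mono _ fun _ hx ↦ ⟨hx.1 i₀, hx.2 j₀⟩

section Barycentric

variable {ι κ 𝕜 E : Type*} [Field 𝕜]

/-- The scalar weight `α i j / ((s - σ i) * (p - π j))` that the two-variable barycentric form
with support points `σ`, `π` gives to the datum at the support pair `(σ i, π j)`. The index pair
is uncurried so that all the weights form a single family, as `Finset.centerMass` requires. -/
def barycentricWeight (σ : ι → 𝕜) (π : κ → 𝕜) (α : ι → κ → 𝕜) (s p : 𝕜) (ij : ι × κ) : 𝕜 :=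
  α ij.1 ij.2 / ((s - σ ij.1) * (p - π ij.2))

/-- The two-variable barycentric form `H̃(s, p) = N(s, p) / d(s, p)` with support points `σ`, `π`,
scalar weights `α` and vector coefficients `B`. It is meaningful only away from the support points
and the zeros of `d`; elsewhere its value is determined by `0⁻¹ = 0`. -/
def barycentricForm [Fintype ι] [Fintype κ] [AddCommGroup E] [Module 𝕜 E]
    (σ : ι → 𝕜) (π : κ → 𝕜) (α : ι → κ → 𝕜) (B : ι → κ → E) (s p : 𝕜) : E :=
  (∑ i, ∑ j, α i j / ((s - σ i) * (p - π j)))⁻¹ • ∑ i, ∑ j, ((s - σ i) * (p - π j))⁻¹ • B i j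

theorem barycentricForm_smul_eq_centerMass [Fintype ι] [Fintype κ] [AddCommGroup E] [Module 𝕜 E]
    (σ : ι → 𝕜) (π : κ → 𝕜) (α : ι → κ → 𝕜) (H : ι → κ → E) (s p : 𝕜) :
    barycentricForm σ π α (fun i j ↦ α i j • H i j) s p =
      Finset.univ.centerMass (barycentricWeight σ π α s p) (Function.uncurry H) := by
  simp only [barycentricForm, barycentricWeight, Finset.centerMass, Fintype.sum_prod_type,
    Function.uncurry_apply_pair, smul_smul, div_eq_inv_mul]

theorem barycentricWeight_ne_zero {σ : ι → 𝕜} {π : κ → 𝕜} {α : ι → κ → 𝕜} {s p : 𝕜} {i : ι} {j : κ}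
    (hα : α i j ≠ 0) (hs : s ≠ σ i) (hp : p ≠ π j) : barycentricWeight σ π α s p (i, j) ≠ 0 :=
  div_ne_zero hα (mul_ne_zero (sub_ne_zero.2 hs) (sub_ne_zero.2 hp))

theorem barycentricWeight_div_barycentricWeight (σ : ι → 𝕜) (π : κ → 𝕜) (α : ι → κ → 𝕜) (s p : 𝕜)
    (i i₀ : ι) (j j₀ : κ) :
    barycentricWeight σ π α s p (i, j) / barycentricWeight σ π α s p (i₀, j₀) =
      α i j / α i₀ j₀ * ((s - σ i₀) / (s - σ i) * ((p - π j₀) / (p - π j))) := by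
  simp only [barycentricWeight, div_div_div_eq, div_mul_div_comm]
  ring

variable [TopologicalSpace 𝕜] [IsTopologicalDivisionRing 𝕜]

theorem tendsto_barycentricWeight_div {σ : ι → 𝕜} {π : κ → 𝕜} (α : ι → κ → 𝕜) {i i₀ : ι} {j j₀ : κ}
    (h : σ i = σ i₀ → π j ≠ π j₀) :
    Tendsto (fun x : 𝕜 × 𝕜 ↦ barycentricWeight σ π α x.1 x.2 (i, j) /
        barycentricWeight σ π α x.1 x.2 (i₀, j₀))
      (𝓝[≠] (σ i₀) ×ˢ 𝓝[≠] (π j₀)) (𝓝 0) := by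
  classical
  simp only [barycentricWeight_div_barycentricWeight]
  have product_limit := ((tendsto_sub_div_sub (σ i₀) (σ i)).comp tendsto_fst).mul
    ((tendsto_sub_div_sub (π j₀) (π j)).comp (tendsto_snd (f := 𝓝[≠] (σ i₀))))
  have limit_eq_zero :
      (if σ i = σ i₀ then (1 : 𝕜) else 0) * (if π j = π j₀ then 1 else 0) = 0 := by
    rw [ite_zero_mul_ite_zero, if_neg fun hij ↦ h hij.1 hij.2]
  rw [limit_eq_zero] at product_limit
  simpa using product_limit.const_mul (α i j / α i₀ j₀)

theorem mimo_barycentric_interpolation_general [Fintype ι] [Fintype κ]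
    [AddCommGroup E] [Module 𝕜 E] [TopologicalSpace E] [ContinuousAdd E] [ContinuousSMul 𝕜 E]
    {σ : ι → 𝕜} {π : κ → 𝕜} {α : ι → κ → 𝕜} {i₀ : ι} {j₀ : κ}
    (hσπ : ∀ i j, σ i = σ i₀ → π j = π j₀ → (i, j) = (i₀, j₀)) (hα : α i₀ j₀ ≠ 0)
    (H : ι → κ → E) :
    Tendsto (fun x : 𝕜 × 𝕜 ↦ barycentricForm σ π α (fun i j ↦ α i j • H i j) x.1 x.2)
      (𝓝[≠] (σ i₀) ×ˢ 𝓝[≠] (π j₀)) (𝓝 (H i₀ j₀)) := by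
  simp only [barycentricForm_smul_eq_centerMass]
  refine tendsto_centerMass_of_dominant_weight (Finset.mem_univ (i₀, j₀)) ?_ ?_ (Function.uncurry H)
  · filter_upwards [prod_mem_prod self_mem_nhdsWithin self_mem_nhdsWithin] with x hx
    exact barycentricWeight_ne_zero hα hx.1 hx.2
  · rintro ⟨i, j⟩ - hij
    exact tendsto_barycentricWeight_div α fun hi hj ↦ hij (hσπ i j hi hj)

end Barycentric

/-- interpolation part of Proposition 4.1: With distinct support
points `σ i`, `π j`, matrix data `H i j ∈ ℂ^{m×n}`, scalar weights `α i j` with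
`α i₀ j₀ ≠ 0`, and the MIMO p-AAA choice `B i j = α i j • H i j`, the
matrix-valued barycentric form `H̃(s,p) = N(s,p)/d(s,p)` (scalar division of the
matrix numerator by the scalar denominator) tends to `H i₀ j₀` as
`(s,p) → (σ i₀, π j₀)` within the pairs avoiding all support points. -/
theorem mimo_barycentric_interpolation
    (k q m n : ℕ) (σ : Fin k → ℂ) (π : Fin q → ℂ)
    (hσ : Function.Injective σ) (hπ : Function.Injective π)
    (H : Fin k → Fin q → Matrix (Fin m) (Fin n) ℂ)
    (α : Fin k → Fin q → ℂ)
    (B : Fin k → Fin q → Matrix (Fin m) (Fin n) ℂ)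
    (hB : ∀ i j, B i j = α i j • H i j)
    (i₀ : Fin k) (j₀ : Fin q) (hα : α i₀ j₀ ≠ 0) :
    Tendsto (fun x : ℂ × ℂ =>
        (∑ i, ∑ j, α i j / ((x.1 - σ i) * (x.2 - π j)))⁻¹ •
          (∑ i, ∑ j, ((x.1 - σ i) * (x.2 - π j))⁻¹ • B i j))
      (nhdsWithin (σ i₀, π j₀)
        {x : ℂ × ℂ | (∀ i, x.1 ≠ σ i) ∧ (∀ j, x.2 ≠ π j)})
      (nhds (H i₀ j₀)) := by
  obtain rfl : B = fun i j ↦ α i j • H i j := funext₂ hB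
  exact (mimo_barycentric_interpolation_general (fun _ _ hi hj ↦ Prod.ext (hσ hi) (hπ hj)) hα
    H).mono_left (nhdsWithin_avoiding_le_prod_nhdsNE σ π i₀ j₀)
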